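/- Let G = A *_C B be an amalgamated free product (with C embedded in A and in B via the given injections, and A, B identified with their images in G). Let g ∈ A and suppose that no conjugate of g by an element of A lies in C. If g' ∈ A ∪ B and g is conjugate in G to g', then g' ∈ A and g is conjugate to g' by an element of A. -/

import Mathlib

universe u

/-- The two-element family of groups `A, B`, indexed by `Bool`. -/
abbrev pairFam (A B : Type u) : Bool → Type u := fun b => cond b A B

instance pairFamGroup {A B : Type u} [Group A] [Group B] : ∀ b, Group (pairFam A B b) :=
  fun b => match b with
  | true => ‹Group A›
  | false => ‹Group B›

/-- The pair of edge inclusions `ι_A : C →* A`, `ι_B : C →* B` as a family indexed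
by `Bool`. -/
abbrev pairHom {A B : Type u} {C : Type*} [Group A] [Group B] [Group C]
    (ιA : C →* A) (ιB : C →* B) : ∀ b, C →* pairFam A B b :=
  fun b => match b with
  | true => ιA
  | false => ιB

namespace AmalgAux
open Monoid Monoid.CoprodI

variable {ι : Type*} {G : ι → Type*} {H : Type*} [∀ i, Group (G i)] [Group H]
  {φ : ∀ i, H →* G i}

inductive T (φ : ∀ i, H →* G i) (i₀ : ι) (g : G i₀) : ι → PushoutI φ → Prop
  | base (a : G i₀) : T φ i₀ g i₀ (PushoutI.of i₀ (a * g * a⁻¹))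
  | step (i j : ι) (x : PushoutI φ) (y : G i) (hij : i ≠ j) (hx : T φ i₀ g j x)
      (hy : y ∉ (φ i).range) :
      T φ i₀ g i (PushoutI.of i y * x * (PushoutI.of i y)⁻¹)

theorem T.conj_base {i₀ : ι} {g : G i₀} {i : ι} {x : PushoutI φ} (h : T φ i₀ g i x) (c : H) :
    T φ i₀ g i (PushoutI.base φ c * x * (PushoutI.base φ c)⁻¹) := by
  cases h with
  | base a =>
    have := T.base (φ := φ) (g := g) (φ i₀ c * a)
    convert this using 1
    rw [← PushoutI.of_apply_eq_base φ i₀]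
    simp only [map_mul, map_inv, mul_inv_rev, mul_assoc]
  | step i j x y hij hx hy =>
    have := T.step i j x (φ i c * y) hij hx (by
      rwa [Subgroup.mul_mem_cancel_left _ (MonoidHom.mem_range.2 ⟨c, rfl⟩)])
    convert this using 1
    rw [← PushoutI.of_apply_eq_base φ i]
    simp only [map_mul, mul_inv_rev, mul_assoc]

theorem T.conj_of {i₀ : ι} {g : G i₀} {i : ι} {x : PushoutI φ} (h : T φ i₀ g i x)
    (j : ι) (y : G j) :
    ∃ k, T φ i₀ g k (PushoutI.of j y * x * (PushoutI.of j y)⁻¹) := by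
  by_cases hy : y ∈ (φ j).range
  · obtain ⟨c, rfl⟩ := hy
    rw [PushoutI.of_apply_eq_base]
    exact ⟨i, h.conj_base c⟩
  by_cases hij : j = i
  · subst hij
    cases h with
    | base a =>
      have := T.base (φ := φ) (g := g) (y * a)
      refine ⟨i₀, ?_⟩
      convert this using 1
      simp only [map_mul, map_inv, mul_inv_rev, mul_assoc]
    | step _ k x z hij hx hz =>
      have e : PushoutI.of j y * (PushoutI.of j z * x * (PushoutI.of j z)⁻¹) * (PushoutI.of j y)⁻¹
          = PushoutI.of (φ := φ) j (y * z) * x * (PushoutI.of j (y * z))⁻¹ := by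
        simp only [map_mul, mul_inv_rev, mul_assoc]
      rw [e]
      by_cases hyz : y * z ∈ (φ j).range
      · obtain ⟨c, hc⟩ := hyz
        rw [← hc, PushoutI.of_apply_eq_base]
        exact ⟨k, hx.conj_base c⟩
      · exact ⟨j, T.step j k x _ hij hx hyz⟩
  · exact ⟨j, T.step j i x y hij h hy⟩

theorem T.conj {i₀ : ι} {g : G i₀} (u : PushoutI φ) {i : ι} {x : PushoutI φ}
    (h : T φ i₀ g i x) : ∃ k, T φ i₀ g k (u * x * u⁻¹) := by
  induction u using PushoutI.induction_on generalizing i x with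
  | of j y => exact h.conj_of j y
  | base c => exact ⟨i, h.conj_base c⟩
  | mul a b ha hb =>
    obtain ⟨k, hk⟩ := hb h
    obtain ⟨l, hl⟩ := ha hk
    refine ⟨l, ?_⟩
    convert hl using 1
    simp only [mul_inv_rev, mul_assoc]

theorem ne_one_of {i : ι} {y : G i} (hy : y ∉ (φ i).range) : y ≠ 1 := by
  rintro rfl
  exact hy (one_mem _)

theorem T.word {i₀ : ι} {g : G i₀} (hg : ∀ a : G i₀, a * g * a⁻¹ ∉ (φ i₀).range)
    {i : ι} {x : PushoutI φ} (h : T φ i₀ g i x) :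
    ∃ w : NeWord G i i, PushoutI.ofCoprodI w.prod = x ∧
      (∀ p ∈ w.toList, p.2 ∉ (φ p.1).range) ∧ 1 ≤ w.toList.length ∧
      ((∃ a : G i₀, PushoutI.of i₀ (a * g * a⁻¹) = x) ∨ 3 ≤ w.toList.length) := by
  induction h with
  | base a =>
    refine ⟨NeWord.singleton _ (ne_one_of (hg a)), by simp, ?_, by simp, Or.inl ⟨a, rfl⟩⟩
    simpa using hg a
  | step i j x y hij hx hy ih =>
    obtain ⟨w, hw, hr, hl, -⟩ := ih
    have hy' : y⁻¹ ∉ (φ i).range := by rwa [inv_mem_iff]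
    refine ⟨((NeWord.singleton y (ne_one_of hy)).append hij w).append hij.symm
      (NeWord.singleton y⁻¹ (ne_one_of hy')), ?_, ?_, ?_, Or.inr ?_⟩
    · simp [hw]
    · intro p hp
      simp only [NeWord.toList, List.mem_append, List.mem_singleton] at hp
      rcases hp with (rfl | hp) | rfl
      · exact hy
      · exact hr p hp
      · exact hy'
    · simp [NeWord.toList]
    · simp [NeWord.toList]; omega

theorem main (hφ : ∀ i, Function.Injective (φ i)) {i₀ : ι} {g : G i₀}
    (hg : ∀ a : G i₀, a * g * a⁻¹ ∉ (φ i₀).range) (u : PushoutI φ) (j : ι) (b : G j)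
    (h : u * PushoutI.of i₀ g * u⁻¹ = PushoutI.of j b) :
    ∃ a : G i₀, PushoutI.of (φ := φ) i₀ (a * g * a⁻¹) = PushoutI.of j b := by
  have h0 : T φ i₀ g i₀ (PushoutI.of i₀ g) := by
    simpa using T.base (φ := φ) (g := g) 1
  obtain ⟨k, hk⟩ := h0.conj u
  rw [h] at hk
  obtain ⟨w, hw, hr, hl, h3⟩ := hk.word hg
  rcases h3 with h3 | h3
  · exact h3
  exfalso
  have hR : PushoutI.Reduced φ w.toWord := hr
  have hwp : PushoutI.ofCoprodI w.toWord.prod = PushoutI.of (φ := φ) j b := hw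
  by_cases hb : b ∈ (φ j).range
  · obtain ⟨c, rfl⟩ := hb
    have := hR.eq_empty_of_mem_range hφ (by
      rw [hwp, PushoutI.of_apply_eq_base]; exact ⟨c, rfl⟩)
    have h2 : w.toList = [] := congrArg Word.toList this
    simp [h2] at h3
  · have hR' : PushoutI.Reduced φ (NeWord.singleton b (ne_one_of hb)).toWord := by
      intro p hp
      simp only [NeWord.toWord, NeWord.toList, List.mem_singleton] at hp
      subst hp
      exact hb
    obtain ⟨d⟩ := PushoutI.NormalWord.transversal_nonempty φ hφ
    obtain ⟨w₁, p₁, l₁⟩ := hR.exists_normalWord_prod_eq d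
    obtain ⟨w₂, p₂, l₂⟩ := hR'.exists_normalWord_prod_eq d
    have p₃ : PushoutI.ofCoprodI (NeWord.singleton b (ne_one_of hb)).toWord.prod
        = PushoutI.of (φ := φ) j b := by
      change PushoutI.ofCoprodI (NeWord.singleton b (ne_one_of hb)).prod = _
      simp
    have e : w₁ = w₂ := PushoutI.NormalWord.prod_injective (by rw [p₁, p₂, p₃, hwp])
    subst e
    have := congrArg List.length (l₁.symm.trans l₂)
    simp [NeWord.toWord, NeWord.toList] at this
    omega

end AmalgAux

/-- In an amalgamated free product `G = A *_C B`, if `g ∈ A` has no conjugate by an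
element of `A` lying in (the image of) `C`, and `g' ∈ A ∪ B` is conjugate in `G` to
`g`, then `g' ∈ A` and `g` is conjugate to `g'` by an element of `A`. -/
theorem amalgam_conjugacy_into_factor {A B : Type u} {C : Type*}
    [Group A] [Group B] [Group C]
    (ιA : C →* A) (ιB : C →* B)
    (hιA : Function.Injective ιA) (hιB : Function.Injective ιB)
    (g : A) (hg : ∀ x : A, x * g * x⁻¹ ∉ Set.range ιA)
    (g' : Monoid.PushoutI (pairHom ιA ιB))
    (hg' : (∃ a' : A, Monoid.PushoutI.of (φ := pairHom ιA ιB) true a' = g') ∨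
           (∃ b' : B, Monoid.PushoutI.of (φ := pairHom ιA ιB) false b' = g'))
    (hconj : ∃ u : Monoid.PushoutI (pairHom ιA ιB),
      u * Monoid.PushoutI.of (φ := pairHom ιA ιB) true g * u⁻¹ = g') :
    (∃ a' : A, Monoid.PushoutI.of (φ := pairHom ιA ιB) true a' = g') ∧
    ∃ x : A, Monoid.PushoutI.of (φ := pairHom ιA ιB) true (x * g * x⁻¹) = g' := by
  have hφ : ∀ i, Function.Injective (pairHom ιA ιB i) := by
    rintro (_ | _)
    · exact hιB
    · exact hιA
  let g₀ : pairFam A B true := g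
  have hg2 : ∀ a : pairFam A B true, a * g₀ * a⁻¹ ∉
      (pairHom ιA ιB true).range := fun a h => hg a h
  obtain ⟨u, hu⟩ := hconj
  have key : ∃ x : A, Monoid.PushoutI.of (φ := pairHom ιA ιB) true (x * g * x⁻¹) = g' := by
    rcases hg' with ⟨b, rfl⟩ | ⟨b, rfl⟩
    · exact AmalgAux.main hφ hg2 u true b hu
    · exact AmalgAux.main hφ hg2 u false b hu
  exact ⟨key.imp' (fun x => x * g * x⁻¹) fun x hx => hx, key⟩
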